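/- For every odd integer n ≥ 3, the prism D_n is super edge-magic; that is, there exists a bijection f : V(D_n) → {1, 2, ..., 2n} such that the sums f(u) + f(v) over the 3n edges of D_n are pairwise distinct and form a set of 3n consecutive integers. -/

import Mathlib

/-!
Write `n = 2m + 1` and let `a` be the classical labelling of `C_n` by `1, …, n`, namely
`1, m + 2, 2, m + 3, …, m + 1`. The sum of `a` along the edge from `i` to its successor `i'` is
`m + 2 + i'`, so the `n` edge sums of the cycle are exactly `m + 2, …, m + 1 + n`.

The prism is labelled by `(i, 0) ↦ a i` and `(i, 1) ↦ n + a i'`. The copy `0` of the cycle then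
has edge sums `a i + a i'`, the copy `1` has edge sums `2n + a i' + a i''`, and, because of the
shift by one in the second copy, the rung at `i` has edge sum `n + a i + a i'`. These three families
fill three adjacent blocks of `n` consecutive integers, beginning at `m + 2`.
-/

/-- The induced edge label `f u + f v` of an unordered pair. -/
def edgeSum {V : Type*} (f : V → ℕ) : Sym2 V → ℕ :=
  Sym2.lift ⟨fun a b => f a + f b, fun a b => Nat.add_comm (f a) (f b)⟩

/-- The prism `D_n = C_n □ K₂`. -/
def prism (n : ℕ) : SimpleGraph (Fin n × Fin 2) :=
  (SimpleGraph.cycleGraph n).boxProd (⊤ : SimpleGraph (Fin 2))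

/-- The cyclic successor of a vertex of `C_n`. -/
def cycSucc {n : ℕ} (i : Fin n) : Fin n :=
  ⟨if i.val + 1 = n then 0 else i.val + 1, by split <;> omega⟩

/-- The labelling `1, m + 2, 2, m + 3, …, m + 1` of the vertices of `C_n`, where `n = 2m + 1`. -/
def cycLabel {n : ℕ} (i : Fin n) : ℕ :=
  if i.val % 2 = 0 then i.val / 2 + 1 else (n + i.val) / 2 + 1

/-- The labelling of the prism: `cycLabel` on the copy `0` of the cycle, and `cycLabel` advanced by
one step and raised by `n` on the copy `1`. -/
def prismLabel {n : ℕ} (p : Fin n × Fin 2) : ℕ :=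
  if p.2 = 0 then cycLabel p.1 else n + cycLabel (cycSucc p.1)

/-- The edges of the prism: `(i, 0)` and `(i, 2)` are the edges leaving `i` in the copies `0` and
`1` of the cycle, and `(i, 1)` is the rung at `i`. The order of the three kinds is that of their
edge sums. -/
def prismEdge {n : ℕ} (q : Fin n × Fin 3) : Sym2 (Fin n × Fin 2) :=
  if q.2 = 0 then s((q.1, 0), (cycSucc q.1, 0))
  else if q.2 = 1 then s((q.1, 0), (q.1, 1))
  else s((q.1, 1), (cycSucc q.1, 1))

lemma cycSucc_val {n : ℕ} (i : Fin n) :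
    (cycSucc i).val = if i.val + 1 = n then 0 else i.val + 1 := rfl

lemma cycSucc_injective {n : ℕ} : Function.Injective (cycSucc (n := n)) := by
  intro i j h
  have h' := congrArg Fin.val h
  simp only [cycSucc_val] at h'
  ext
  split_ifs at h' <;> omega

lemma cycSucc_surjective {n : ℕ} : Function.Surjective (cycSucc (n := n)) :=
  Finite.surjective_of_injective cycSucc_injective

lemma cycleGraph_adj_iff {n : ℕ} (hn : 3 ≤ n) (u v : Fin n) :
    (SimpleGraph.cycleGraph n).Adj u v ↔ v = cycSucc u ∨ u = cycSucc v := by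
  rw [SimpleGraph.cycleGraph_adj']
  have key : ∀ x y : Fin n, (x - y).val = 1 ↔ x = cycSucc y := by
    intro x y
    have hx := x.isLt
    have hy := y.isLt
    rw [Fin.ext_iff, cycSucc_val, Fin.val_sub]
    rcases le_or_gt y.val x.val with h | h
    · rw [show n - y.val + x.val = (x.val - y.val) + n by omega, Nat.add_mod_right,
        Nat.mod_eq_of_lt (by omega)]
      split_ifs <;> omega
    · rw [Nat.mod_eq_of_lt (by omega)]
      split_ifs <;> omega
  rw [key, key, or_comm]

lemma cycLabel_mem {n : ℕ} (hodd : Odd n) (i : Fin n) : 1 ≤ cycLabel i ∧ cycLabel i ≤ n := by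
  obtain ⟨m, rfl⟩ := hodd
  have := i.isLt
  unfold cycLabel
  split_ifs <;> omega

lemma cycLabel_injective {n : ℕ} (hodd : Odd n) : Function.Injective (cycLabel (n := n)) := by
  obtain ⟨m, rfl⟩ := hodd
  intro i j h
  have := i.isLt
  have := j.isLt
  unfold cycLabel at h
  ext
  split_ifs at h <;> omega

lemma cycLabel_surj {n : ℕ} (hodd : Odd n) (y : ℕ) (h1 : 1 ≤ y) (h2 : y ≤ n) :
    ∃ i : Fin n, cycLabel i = y := by
  obtain ⟨m, rfl⟩ := hodd
  rcases le_or_gt y (m + 1) with h | h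
  · refine ⟨⟨2 * (y - 1), by omega⟩, ?_⟩
    simp only [cycLabel]
    split_ifs <;> omega
  · refine ⟨⟨2 * (y - m - 1) - 1, by omega⟩, ?_⟩
    simp only [cycLabel]
    split_ifs <;> omega

lemma cycLabel_add {n : ℕ} (hodd : Odd n) (i : Fin n) :
    cycLabel i + cycLabel (cycSucc i) = n / 2 + 2 + (cycSucc i).val := by
  obtain ⟨m, rfl⟩ := hodd
  have := i.isLt
  simp only [cycLabel, cycSucc_val]
  split_ifs <;> omega

lemma prismLabel_bijOn {n : ℕ} (hodd : Odd n) :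
    Set.BijOn (prismLabel (n := n)) Set.univ (Set.Icc 1 (2 * n)) := by
  refine ⟨?_, ?_, ?_⟩
  · rintro ⟨i, b⟩ -
    have h1 := cycLabel_mem hodd i
    have h2 := cycLabel_mem hodd (cycSucc i)
    simp only [prismLabel, Set.mem_Icc]
    split_ifs <;> omega
  · rintro ⟨i, b⟩ - ⟨j, c⟩ - h
    have h1 := cycLabel_mem hodd i
    have h2 := cycLabel_mem hodd (cycSucc i)
    have h3 := cycLabel_mem hodd j
    have h4 := cycLabel_mem hodd (cycSucc j)
    simp only [prismLabel] at h
    split_ifs at h with hb hc hc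
    · rw [cycLabel_injective hodd h, hb, hc]
    · omega
    · omega
    · rw [cycSucc_injective (cycLabel_injective hodd (Nat.add_left_cancel h))]
      congr 1
      omega
  · rintro y ⟨h1, h2⟩
    rcases le_or_gt y n with h | h
    · obtain ⟨i, hi⟩ := cycLabel_surj hodd y h1 h
      exact ⟨(i, 0), trivial, by simpa [prismLabel] using hi⟩
    · obtain ⟨j, hj⟩ := cycLabel_surj hodd (y - n) (by omega) (by omega)
      obtain ⟨i, rfl⟩ := cycSucc_surjective j
      exact ⟨(i, 1), trivial, by simp [prismLabel, hj]; omega⟩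

lemma range_prismEdge {n : ℕ} (hn : 3 ≤ n) :
    Set.range (prismEdge (n := n)) = (prism n).edgeSet := by
  ext e
  constructor
  · rintro ⟨⟨i, t⟩, rfl⟩
    fin_cases t <;>
      simp [prismEdge, prism, SimpleGraph.boxProd_adj, cycleGraph_adj_iff hn]
  · induction e using Sym2.ind with
    | _ p q =>
      obtain ⟨u, b⟩ := p
      obtain ⟨v, c⟩ := q
      intro h
      simp only [SimpleGraph.mem_edgeSet, prism, SimpleGraph.boxProd_adj, SimpleGraph.top_adj,
        cycleGraph_adj_iff hn] at h
      rcases h with ⟨rfl | rfl, rfl⟩ | ⟨hbc, rfl⟩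
      · fin_cases b
        · exact ⟨(u, 0), by simp [prismEdge]⟩
        · exact ⟨(u, 2), by simp [prismEdge]⟩
      · fin_cases b
        · exact ⟨(v, 0), by simp [prismEdge]⟩
        · exact ⟨(v, 2), by simp [prismEdge]⟩
      · refine ⟨(u, 1), ?_⟩
        fin_cases b <;> fin_cases c <;> simp_all [prismEdge]

/-- In each of the three blocks, the edge sum is the start of the block plus a cyclic shift of the
position; the shift is by two in the copy `1`, whose labels are already advanced by one. -/
lemma edgeSum_prismEdge {n : ℕ} (hodd : Odd n) (i : Fin n) (t : Fin 3) :
    edgeSum prismLabel (prismEdge (i, t)) = n / 2 + 2 + t.val * n +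
      (if t = 2 then cycSucc (cycSucc i) else cycSucc i).val := by
  have h1 := cycLabel_add hodd i
  have h2 := cycLabel_add hodd (cycSucc i)
  fin_cases t <;> simp [prismEdge, edgeSum, prismLabel] <;> omega

/-- For every odd `n ≥ 3`, the prism `D_n` is super edge-magic: there is a bijection
`f : V(D_n) → [1, 2n]` whose `3n` edge sums are pairwise distinct and form `3n`
consecutive integers. -/
theorem prism_odd_super_edge_magic (n : ℕ) (hn : 3 ≤ n) (hodd : Odd n) :
    ∃ f : Fin n × Fin 2 → ℕ, Set.BijOn f Set.univ (Set.Icc 1 (2 * n)) ∧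
      ∃ c : ℕ, Set.BijOn (edgeSum f) (prism n).edgeSet (Set.Icc c (c + 3 * n - 1)) := by
  refine ⟨prismLabel, prismLabel_bijOn hodd, n / 2 + 2, ?_⟩
  rw [← range_prismEdge hn]
  refine ⟨?_, ?_, ?_⟩
  · rintro _ ⟨⟨i, t⟩, rfl⟩
    rw [edgeSum_prismEdge hodd, Set.mem_Icc]
    have := (if t = 2 then cycSucc (cycSucc i) else cycSucc i).isLt
    have : t.val * n ≤ 2 * n := Nat.mul_le_mul_right n (by omega)
    omega
  · rintro _ ⟨⟨i, t⟩, rfl⟩ _ ⟨⟨j, s⟩, rfl⟩ h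
    rw [edgeSum_prismEdge hodd, edgeSum_prismEdge hodd] at h
    have hi := (if t = 2 then cycSucc (cycSucc i) else cycSucc i).isLt
    have hj := (if s = 2 then cycSucc (cycSucc j) else cycSucc j).isLt
    -- The blocks are disjoint, so equal sums force the same kind of edge.
    have hts : t = s := by
      revert h hi hj
      generalize (if t = 2 then cycSucc (cycSucc i) else cycSucc i).val = x
      generalize (if s = 2 then cycSucc (cycSucc j) else cycSucc j).val = y
      intro h hi hj
      fin_cases t <;> fin_cases s <;> simp at h ⊢ <;> omega
    subst hts
    have h' := Fin.ext (Nat.add_left_cancel h)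
    have hij : i = j := by
      split_ifs at h'
      · exact cycSucc_injective (cycSucc_injective h')
      · exact cycSucc_injective h'
    rw [hij]
  · rintro y ⟨h1, h2⟩
    obtain ⟨t, r, hr⟩ : ∃ (t : Fin 3) (r : Fin n), y = n / 2 + 2 + t.val * n + r.val := by
      rcases lt_or_ge y (n / 2 + 2 + n) with h | h
      · exact ⟨0, ⟨y - (n / 2 + 2), by omega⟩, by simp; omega⟩
      rcases lt_or_ge y (n / 2 + 2 + 2 * n) with h' | h'
      · exact ⟨1, ⟨y - (n / 2 + 2 + n), by omega⟩, by simp; omega⟩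
      · exact ⟨2, ⟨y - (n / 2 + 2 + 2 * n), by omega⟩, by simp; omega⟩
    obtain ⟨j, rfl⟩ := cycSucc_surjective r
    obtain ⟨i, rfl⟩ := cycSucc_surjective j
    by_cases ht : t = 2
    · exact ⟨_, ⟨(i, t), rfl⟩, by rw [edgeSum_prismEdge hodd, if_pos ht, hr]⟩
    · exact ⟨_, ⟨(cycSucc i, t), rfl⟩, by rw [edgeSum_prismEdge hodd, if_neg ht, hr]⟩
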